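/- For every commutative ring R, every n ≥ 1, and all vectors v, w ∈ R^{n+1}, det S_n(v,w) = (v·wᵀ)^{2^{n−1}}. -/

import Mathlib

open Matrix

noncomputable section

/-- Reindexing equivalence `Fin (2 ^ n) ⊕ Fin (2 ^ n) ≃ Fin (2 ^ (n + 1))`. -/
def pow2Equiv (n : ℕ) : Fin (2 ^ n) ⊕ Fin (2 ^ n) ≃ Fin (2 ^ (n + 1)) :=
  finSumFinEquiv.trans (finCongr (by rw [pow_succ]; ring))

/-- The Suslin matrix `S_n(v, w)` of size `2 ^ n` associated to `v, w : Fin (n+1) → R`. -/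
def sus (R : Type) [CommRing R] : (n : ℕ) → (Fin (n + 1) → R) → (Fin (n + 1) → R) →
    Matrix (Fin (2 ^ n)) (Fin (2 ^ n)) R
  | 0, v, _ => v 0 • 1
  | n + 1, v, w =>
      Matrix.reindex (pow2Equiv n) (pow2Equiv n)
        (Matrix.fromBlocks (v 0 • 1) (sus R n (v ∘ Fin.succ) (w ∘ Fin.succ))
          (-(sus R n (w ∘ Fin.succ) (v ∘ Fin.succ))ᵀ) (w 0 • 1))

/-- The conjugate Suslin matrix `S̄_n(v, w) = S_n(w, v)ᵀ`. -/
def susBar (R : Type) [CommRing R] (n : ℕ) (v w : Fin (n + 1) → R) :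
    Matrix (Fin (2 ^ n)) (Fin (2 ^ n)) R :=
  (sus R n w v)ᵀ

/-- Suslin's matrices `J_n`. -/
def Jmat (R : Type) [CommRing R] : (n : ℕ) → Matrix (Fin (2 ^ n)) (Fin (2 ^ n)) R
  | 0 => 1
  | n + 1 =>
      if Even (n + 1) then
        Matrix.reindex (pow2Equiv n) (pow2Equiv n)
          (Matrix.fromBlocks (Jmat R n) 0 0 (-(Jmat R n)))
      else
        Matrix.reindex (pow2Equiv n) (pow2Equiv n)
          (Matrix.fromBlocks 0 (Jmat R n) (-(Jmat R n)) 0)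

/-- The involution `M ↦ M* = J_n · Mᵀ · J_nᵀ`. -/
def invol (R : Type) [CommRing R] (n : ℕ) (M : Matrix (Fin (2 ^ n)) (Fin (2 ^ n)) R) :
    Matrix (Fin (2 ^ n)) (Fin (2 ^ n)) R :=
  Jmat R n * Mᵀ * (Jmat R n)ᵀ

/-- `φ(v, w) = [[0, S_n(v,w)], [S̄_n(v,w), 0]]` (note the shift: vectors in `R^{n+1}`,
matrices of size `2 ^ (n + 1)`). -/
def phiMat (R : Type) [CommRing R] (n : ℕ) (v w : Fin (n + 1) → R) :
    Matrix (Fin (2 ^ (n + 1))) (Fin (2 ^ (n + 1))) R :=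
  Matrix.reindex (pow2Equiv n) (pow2Equiv n)
    (Matrix.fromBlocks 0 (sus R n v w) (susBar R n v w) 0)

/-- The set of Suslin matrices of size `2 ^ m`. -/
def SuslinSet (R : Type) [CommRing R] (m : ℕ) : Set (Matrix (Fin (2 ^ m)) (Fin (2 ^ m)) R) :=
  {S | ∃ v w : Fin (m + 1) → R, S = sus R m v w}

/-- The image of the hyperbolic space `R^{m+1} ⊕ R^{m+1}` inside the Clifford algebra
`M_{2^{m+1}}(R)`. -/
def PhiSet (R : Type) [CommRing R] (m : ℕ) :
    Set (Matrix (Fin (2 ^ (m + 1))) (Fin (2 ^ (m + 1))) R) :=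
  {x | ∃ v w : Fin (m + 1) → R, x = phiMat R m v w}

/-- The block diagonal matrix `diag(g₁, g₂)`. -/
def diagBlock (R : Type) [CommRing R] (m : ℕ)
    (g₁ g₂ : Matrix (Fin (2 ^ m)) (Fin (2 ^ m)) R) :
    Matrix (Fin (2 ^ (m + 1))) (Fin (2 ^ (m + 1))) R :=
  Matrix.reindex (pow2Equiv m) (pow2Equiv m) (Matrix.fromBlocks g₁ 0 0 g₂)

/-- `Spin_{2(m+1)}(R)`, as the set of pairs `(g₁, g₂)` such that `x = diag(g₁, g₂)`
satisfies `x · x* = 1` and conjugation by `x` maps the image of the hyperbolic space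
onto itself. -/
def SpinPair (R : Type) [CommRing R] (m : ℕ) :
    Set (Matrix (Fin (2 ^ m)) (Fin (2 ^ m)) R × Matrix (Fin (2 ^ m)) (Fin (2 ^ m)) R) :=
  {p | IsUnit p.1 ∧ IsUnit p.2 ∧
    diagBlock R m p.1 p.2 * invol R (m + 1) (diagBlock R m p.1 p.2) = 1 ∧
    (fun y => diagBlock R m p.1 p.2 * y * (diagBlock R m p.1 p.2)⁻¹) '' PhiSet R m
      = PhiSet R m}

/-- The group `G_m(R)` of `g ∈ GL_{2^m}(R)` such that `g · S · g*` is a Suslin matrix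
for every Suslin matrix `S`. -/
def GSet (R : Type) [CommRing R] (m : ℕ) : Set (Matrix (Fin (2 ^ m)) (Fin (2 ^ m)) R) :=
  {g | IsUnit g ∧ ∀ S ∈ SuslinSet R m, g * S * invol R m g ∈ SuslinSet R m}

/-- The group `SG_m(R)` of `g ∈ G_m(R)` preserving the length `l(S(v,w)) = v ⬝ᵥ w`. -/
def SGSet (R : Type) [CommRing R] (m : ℕ) : Set (Matrix (Fin (2 ^ m)) (Fin (2 ^ m)) R) :=
  {g | g ∈ GSet R m ∧ ∀ v w v' w' : Fin (m + 1) → R,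
    g * sus R m v w * invol R m g = sus R m v' w' → v' ⬝ᵥ w' = v ⬝ᵥ w}

/-- The hyperbolic quadratic form `q(v, w) = v ⬝ᵥ w` on `R^n ⊕ R^n`. -/
def hypForm (R : Type) [CommRing R] (n : ℕ) :
    QuadraticForm R ((Fin n → R) × (Fin n → R)) :=
  LinearMap.BilinMap.toQuadraticMap
    (LinearMap.mk₂ R (fun x y => x.1 ⬝ᵥ y.2)
      (fun x x' y => by simp [add_dotProduct])
      (fun c x y => by simp [smul_dotProduct])
      (fun x y y' => by simp [dotProduct_add])
      (fun x c y => by simp [dotProduct_smul]))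

/-- `E_i = S_m(e_i, 0)`. -/
def Emat (R : Type) [CommRing R] (m : ℕ) (i : Fin (m + 1)) :
    Matrix (Fin (2 ^ m)) (Fin (2 ^ m)) R :=
  sus R m (Pi.single i 1) 0

/-- `F_i = S_m(0, e_i)`. -/
def Fmat (R : Type) [CommRing R] (m : ℕ) (i : Fin (m + 1)) :
    Matrix (Fin (2 ^ m)) (Fin (2 ^ m)) R :=
  sus R m 0 (Pi.single i 1)

/-!
The recursion makes the Suslin matrix and its conjugate satisfy `S * S̄ = S̄ * S = (v ⬝ᵥ w) • 1`.
The lower blocks `-S̄` and `b₀ • 1` of the next Suslin matrix commute, so its determinant is that of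
`a₀ * b₀ + S * S̄`, a scalar matrix of half the size.
-/

section BlockDeterminant

variable {S m : Type*} [CommRing S] [Fintype m] [DecidableEq m] (A B : Matrix m m S)
  {C D : Matrix m m S}

theorem det_fromBlocks_mul_det_of_commute (h : Commute C D) :
    (fromBlocks A B C D).det * D.det = (A * D - B * C).det * D.det := by
  have hmul : fromBlocks A B C D * fromBlocks D 0 (-C) 1 = fromBlocks (A * D - B * C) B 0 D := by
    simp [fromBlocks_multiply, h.eq, sub_eq_add_neg]
  simpa only [det_mul, det_fromBlocks_zero₁₂, det_fromBlocks_zero₂₁, det_one, mul_one]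
    using congrArg det hmul

-- Over `S[X]`, replace `D` by `X + D = charmatrix (-D)`: its determinant is monic, hence
-- cancellable, and setting `X = 0` recovers the original matrix.
theorem det_fromBlocks_of_commute (h : Commute C D) :
    (fromBlocks A B C D).det = (A * D - B * C).det := by
  let const := (Polynomial.C : S →+* Polynomial S).mapMatrix (m := m)
  let evalZero := (Polynomial.evalRingHom (0 : S)).mapMatrix (m := m)
  have evalZero_const (M : Matrix m m S) : evalZero (const M) = M := by ext; simp [evalZero, const]
  have evalZero_charmatrix : evalZero (charmatrix (-D)) = D := by
    ext i j; by_cases hij : i = j <;> simp [evalZero, hij]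
  have hcomm : Commute (const C) (charmatrix (-D)) :=
    (scalar_commute _ (Commute.all _) _).symm.sub_right (h.neg_right.map const)
  have hdet : (fromBlocks (const A) (const B) (const C) (charmatrix (-D))).det =
      (const A * charmatrix (-D) - const B * const C).det :=
    (charpoly_monic (-D)).isRegular.right (det_fromBlocks_mul_det_of_commute _ _ hcomm)
  have heval := congrArg (Polynomial.evalRingHom (0 : S)) hdet
  rw [RingHom.map_det, RingHom.map_det, RingHom.mapMatrix_apply, fromBlocks_map] at heval
  simpa only [← RingHom.mapMatrix_apply, map_sub, map_mul, evalZero_const,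
    evalZero_charmatrix, evalZero] using heval

end BlockDeterminant

theorem fromBlocks_smul_one_mul_fromBlocks_smul_one {S m n : Type*} [CommRing S] [Fintype m]
    [Fintype n] [DecidableEq m] [DecidableEq n] (a b : S) {q : S} {B : Matrix m n S}
    {C : Matrix n m S} (hBC : B * C = q • 1) (hCB : C * B = q • 1) :
    fromBlocks (a • 1) B (-C) (b • 1) * fromBlocks (b • 1) (-B) C (a • 1) = (a * b + q) • 1 := by
  rw [← fromBlocks_one, fromBlocks_smul]
  simp [fromBlocks_multiply, hBC, hCB, smul_smul, add_smul, mul_comm, add_comm]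

theorem dotProduct_fin_succ {α : Type*} [Mul α] [AddCommMonoid α] {n : ℕ} (v w : Fin (n + 1) → α) :
    v ⬝ᵥ w = v 0 * w 0 + (v ∘ Fin.succ) ⬝ᵥ (w ∘ Fin.succ) :=
  Fin.sum_univ_succ _

section Suslin

variable {R : Type} [CommRing R] {n : ℕ}

theorem sus_succ (v w : Fin (n + 2) → R) :
    sus R (n + 1) v w = reindex (pow2Equiv n) (pow2Equiv n)
      (fromBlocks (v 0 • 1) (sus R n (v ∘ Fin.succ) (w ∘ Fin.succ))
        (-susBar R n (v ∘ Fin.succ) (w ∘ Fin.succ)) (w 0 • 1)) :=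
  rfl

theorem susBar_succ (v w : Fin (n + 2) → R) :
    susBar R (n + 1) v w = reindex (pow2Equiv n) (pow2Equiv n)
      (fromBlocks (w 0 • 1) (-sus R n (v ∘ Fin.succ) (w ∘ Fin.succ))
        (susBar R n (v ∘ Fin.succ) (w ∘ Fin.succ)) (v 0 • 1)) := by
  simp [susBar, sus, fromBlocks_transpose]

theorem sus_mul_susBar_and_susBar_mul_sus (v w : Fin (n + 1) → R) :
    sus R n v w * susBar R n v w = (v ⬝ᵥ w) • 1 ∧
      susBar R n v w * sus R n v w = (v ⬝ᵥ w) • 1 := by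
  induction n with
  | zero => simp [sus, susBar, dotProduct, smul_smul, mul_comm]
  | succ n ih =>
    obtain ⟨hmul, hmul'⟩ := ih (v ∘ Fin.succ) (w ∘ Fin.succ)
    have hblock := fromBlocks_smul_one_mul_fromBlocks_smul_one (v 0) (w 0) hmul hmul'
    have hblock' := fromBlocks_smul_one_mul_fromBlocks_smul_one (w 0) (v 0)
      ((neg_mul_neg _ _).trans hmul) ((neg_mul_neg _ _).trans hmul')
    simp only [neg_neg] at hblock'
    simp only [sus_succ, susBar_succ, dotProduct_fin_succ v w, reindex_apply, submatrix_mul_equiv,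
      hblock, hblock', mul_comm (w 0), submatrix_smul, Pi.smul_apply, submatrix_one_equiv, and_self]

theorem sus_mul_susBar (v w : Fin (n + 1) → R) :
    sus R n v w * susBar R n v w = (v ⬝ᵥ w) • 1 :=
  (sus_mul_susBar_and_susBar_mul_sus v w).1

end Suslin

/-- For every commutative ring `R`, every `n ≥ 1` and all `v, w ∈ R^{n+1}`,
`det S_n(v,w) = (v ⬝ᵥ w) ^ (2 ^ (n - 1))`.  (Stated with `n + 1` in place of `n`.) -/
theorem suslin_det (R : Type) [CommRing R] (n : ℕ) (v w : Fin (n + 1 + 1) → R) :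
    (sus R (n + 1) v w).det = (v ⬝ᵥ w) ^ (2 ^ n) := by
  have hcomm : Commute (-susBar R n (v ∘ Fin.succ) (w ∘ Fin.succ)) (w 0 • 1) :=
    (Commute.one_right _).smul_right (w 0)
  calc (sus R (n + 1) v w).det
      = ((v 0 • 1) * (w 0 • 1) - sus R n (v ∘ Fin.succ) (w ∘ Fin.succ) *
          -susBar R n (v ∘ Fin.succ) (w ∘ Fin.succ)).det := by
        rw [sus_succ, det_reindex_self, det_fromBlocks_of_commute _ _ hcomm]
    _ = ((v ⬝ᵥ w) • (1 : Matrix (Fin (2 ^ n)) (Fin (2 ^ n)) R)).det := by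
        rw [mul_neg, sus_mul_susBar, sub_neg_eq_add, smul_one_mul, smul_smul, ← add_smul,
          ← dotProduct_fin_succ]
    _ = (v ⬝ᵥ w) ^ (2 ^ n) := by
        rw [det_smul, det_one, mul_one, Fintype.card_fin]
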